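/- arXiv:math/9504209 — 2 statements merged into one kernel-verified Lean document; each statement's English description precedes it below -/
import Mathlib

section
/- Let A, B ∈ SL(2,ℂ) with A ≠ ±1 and B ≠ ±1, and suppose A and B have no common eigenvector in ℂ² (i.e., the corresponding Möbius transformations have disjoint fixed point sets). Then there exists F ∈ SL(2,ℂ) with tr F = 0 such that γ(F,B) = β(B) − γ(A,B), and such that if the subgroup generated by A and B is discrete then the subgroup generated by F and B is discrete. -/
open Matrix Real

noncomputable section

abbrev SL2C := Matrix.SpecialLinearGroup (Fin 2) ℂ

/-- The Frobenius (Hilbert–Schmidt) norm of a 2×2 complex matrix. -/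
def fnorm (A : Matrix (Fin 2) (Fin 2) ℂ) : ℝ :=
  @norm _ Matrix.frobeniusSeminormedAddCommGroup.toNorm A

instance : TopologicalSpace SL2C :=
  TopologicalSpace.induced (fun g => (g : Matrix (Fin 2) (Fin 2) ℂ)) inferInstance

/-- A subgroup of `SL(2,ℂ)` is discrete if it is a discrete subspace of `SL(2,ℂ)`. -/
def IsDiscreteSubgroup (Γ : Subgroup SL2C) : Prop := DiscreteTopology Γ

/-- `A` is elliptic of order `n`: `A^n = ±1` but `A^k ≠ ±1` for `1 ≤ k < n`. -/
def IsEllipticOfOrder (A : SL2C) (n : ℕ) : Prop :=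
  (A ^ n = 1 ∨ A ^ n = -1) ∧ ∀ k : ℕ, 1 ≤ k → k < n → A ^ k ≠ 1 ∧ A ^ k ≠ -1

/-- `A` is parabolic: `A ≠ ±1` and `tr A = ±2`. -/
def IsParabolic (A : SL2C) : Prop :=
  A ≠ 1 ∧ A ≠ -1 ∧ (Matrix.trace (A : Matrix (Fin 2) (Fin 2) ℂ) = 2 ∨
    Matrix.trace (A : Matrix (Fin 2) (Fin 2) ℂ) = -2)

/-- `S` and `T` have a common eigenvector in `ℂ²`. -/
def HasCommonEigenvector (S T : SL2C) : Prop :=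
  ∃ v : Fin 2 → ℂ, v ≠ 0 ∧ (∃ a : ℂ, (S : Matrix (Fin 2) (Fin 2) ℂ).mulVec v = a • v) ∧
    (∃ b : ℂ, (T : Matrix (Fin 2) (Fin 2) ℂ).mulVec v = b • v)

/-- A subgroup of `SL(2,ℂ)` is nonelementary if it contains two elements `S`, `T`
with `S^k ≠ ±1 ≠ T^k` for all `k ≥ 1` having no common eigenvector in `ℂ²`. -/
def IsNonelementary (Γ : Subgroup SL2C) : Prop :=
  ∃ S ∈ Γ, ∃ T ∈ Γ, (∀ k : ℕ, 1 ≤ k → S ^ k ≠ 1 ∧ S ^ k ≠ -1) ∧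
    (∀ k : ℕ, 1 ≤ k → T ^ k ≠ 1 ∧ T ^ k ≠ -1) ∧ ¬ HasCommonEigenvector S T

/-- The trace parameter `β(A) = tr²(A) - 4`. -/
def βp (A : SL2C) : ℂ := (Matrix.trace (A : Matrix (Fin 2) (Fin 2) ℂ)) ^ 2 - 4

/-- The commutator parameter `γ(A,B) = tr [A,B] - 2`. -/
def γp (A B : SL2C) : ℂ :=
  Matrix.trace ((A * B * A⁻¹ * B⁻¹ : SL2C) : Matrix (Fin 2) (Fin 2) ℂ) - 2

/-- `PSL(2,ℂ)`, the quotient of `SL(2,ℂ)` by its center `{1, -1}`. -/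
abbrev PSL2C := SL2C ⧸ Subgroup.center SL2C

/-- The image in `PSL(2,ℂ)` of a subgroup of `SL(2,ℂ)`. -/
def pslImage (Γ : Subgroup SL2C) : Subgroup PSL2C :=
  Γ.map (QuotientGroup.mk' (Subgroup.center SL2C))

open Classical in
/-- `t5`: the unique real `t > 1` with
`t (t - cos²(π/5)) + (t-1) √((t+1)(t+1-2 cos²(π/5))) = 1/2`. -/
def t5 : ℝ :=
  if h : ∃ t : ℝ, 1 < t ∧
      t * (t - Real.cos (π / 5) ^ 2) +
        (t - 1) * Real.sqrt ((t + 1) * (t + 1 - 2 * Real.cos (π / 5) ^ 2)) = 1 / 2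
  then h.choose else 0

/-- The value `t n = cosh (c n)` where `c n` is the sharp displacement bound for
discrete nonelementary groups with an elliptic generator of order `n ≥ 3`. -/
def tOf : ℕ → ℝ
  | 3 => (2 * Real.sqrt (8 + 2 * Real.sqrt 5) - (1 + Real.sqrt 5)) / (6 - Real.sqrt 5)
  | 4 => (Real.sqrt (6 + 2 * Real.sqrt 3) - Real.sqrt 3) / (3 - Real.sqrt 3)
  | 5 => t5
  | 6 => 17 / 16
  | n => (5 - 2 * Real.sin (π / n) ^ 2) / (4 + 2 * Real.sin (π / n) ^ 2)

/-!
By Cayley–Hamilton, `C = AB - BA` satisfies `C X = adj(X) C` for `X = A` and `X = B`. Hence the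
kernel of `C` is invariant under `A` and `B`, and it contains a common eigenvector unless it is
zero. When there is none, the multiple `P` of `C` of determinant one conjugates `A` and `B` to their
inverses; if `A` and `B` have axes in hyperbolic space, `P` is the half-turn about their common
perpendicular. Take `F = P A`, whose trace vanishes since `C A = A(BA) - (BA)A`. As `P` normalizes
`⟨A, B⟩` and has finite order, `⟨F, B⟩` lies in `⟨P⟩⟨A, B⟩`, in which `⟨A, B⟩` has finite index.
Finally `F B F⁻¹ = A⁻¹ B⁻¹ A`, and the identity `tr XY + tr XY⁻¹ = tr X tr Y` gives `γ(F, B)`.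
-/

open scoped MatrixGroups
open Module Subgroup

section CommonEigenvector

variable {K V W : Type*} [Field K] [AddCommGroup V] [Module K V] [AddCommGroup W] [Module K W]

theorem exists_common_hasEigenvector_of_commute [IsAlgClosed K] [FiniteDimensional K V]
    [Nontrivial V] {f g : End K V} (h : Commute f g) :
    ∃ (v : V) (a b : K), f.HasEigenvector a v ∧ g.HasEigenvector b v := by
  obtain ⟨a, ha⟩ := End.exists_eigenvalue f
  have hmaps : Set.MapsTo g (f.eigenspace a) (f.eigenspace a) :=
    End.mapsTo_genEigenspace_of_comm h a 1
  have : Nontrivial (f.eigenspace a) := Submodule.nontrivial_iff_ne_bot.mpr ha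
  obtain ⟨b, hb⟩ := End.exists_eigenvalue (g.restrict hmaps)
  obtain ⟨v, hv⟩ := hb.exists_hasEigenvector
  have hv0 : (v : V) ≠ 0 := by simpa using hv.2
  have hgv : g v = b • (v : V) := congrArg Subtype.val hv.apply_eq_smul
  exact ⟨v, a, b, ⟨v.2, hv0⟩, ⟨End.mem_eigenspace_iff.mpr hgv, hv0⟩⟩

theorem finrank_ker_eq_one_of_finrank_eq_two (hV : finrank K V = 2) {f : V →ₗ[K] W}
    (hf : f ≠ 0) (hker : f.ker ≠ ⊥) : finrank K f.ker = 1 := by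
  have : FiniteDimensional K V := .of_finrank_eq_succ hV
  have hlt : finrank K f.ker < finrank K V :=
    Submodule.finrank_lt (mt LinearMap.ker_eq_top.mp hf)
  have hpos : 1 ≤ finrank K f.ker := Submodule.one_le_finrank_iff.mpr hker
  omega

theorem exists_apply_eq_smul_of_finrank_eq_one {U : Submodule K V} (hU : finrank K U = 1)
    {f : End K V} (hf : Set.MapsTo f U U) {v : V} (hv : v ∈ U) (hv0 : v ≠ 0) :
    ∃ a : K, f v = a • v := by
  have hspan := (finrank_eq_one_iff_of_nonzero' (⟨v, hv⟩ : U) (by simpa using hv0)).mp hU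
  obtain ⟨a, ha⟩ := hspan ⟨f v, hf hv⟩
  exact ⟨a, congrArg Subtype.val ha.symm⟩

theorem mapsTo_ker_of_semiconjBy {c f g : End K V} (h : SemiconjBy c f g) :
    Set.MapsTo f c.ker c.ker := fun v hv => by
  have hv : c v = 0 := hv
  calc c (f v) = g (c v) := LinearMap.congr_fun h.eq v
    _ = 0 := by rw [hv, map_zero]

end CommonEigenvector

section LieTwoByTwo

variable {R : Type*} [CommRing R]

theorem adjugate_eq_trace_smul_one_sub (M : Matrix (Fin 2) (Fin 2) R) :
    M.adjugate = M.trace • 1 - M := by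
  ext i j
  fin_cases i <;> fin_cases j <;> simp [adjugate_fin_two, trace_fin_two]

theorem mul_self_eq_trace_smul_sub_det_smul_one (M : Matrix (Fin 2) (Fin 2) R) :
    M * M = M.trace • M - M.det • 1 := by
  have h : M * (M.trace • 1 - M) = M.det • 1 := by
    rw [← adjugate_eq_trace_smul_one_sub, mul_adjugate]
  rw [← h, mul_sub, mul_smul_comm, mul_one, sub_sub_cancel]

theorem semiconjBy_lie_left_adjugate (A B : Matrix (Fin 2) (Fin 2) R) :
    SemiconjBy ⁅A, B⁆ A A.adjugate := by
  have hsq : ⁅A * A, B⁆ = A.trace • ⁅A, B⁆ := by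
    simp [mul_self_eq_trace_smul_sub_det_smul_one A, Ring.lie_def, sub_mul, mul_sub, smul_sub]
  calc ⁅A, B⁆ * A = ⁅A * A, B⁆ - A * ⁅A, B⁆ := by simp only [Ring.lie_def]; noncomm_ring
    _ = A.adjugate * ⁅A, B⁆ := by
      rw [hsq, adjugate_eq_trace_smul_one_sub, sub_mul, smul_one_mul]

theorem semiconjBy_lie_right_adjugate (A B : Matrix (Fin 2) (Fin 2) R) :
    SemiconjBy ⁅A, B⁆ B B.adjugate := by
  have hskew : ⁅A, B⁆ = -⁅B, A⁆ := by simp only [Ring.lie_def, neg_sub]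
  exact hskew ▸ (semiconjBy_lie_left_adjugate B A).neg_left

theorem trace_lie_mul_left {n : Type*} [Fintype n] (A B : Matrix n n R) :
    trace (⁅A, B⁆ * A) = 0 := by
  have hlie : ⁅A, B⁆ * A = A * (B * A) - B * A * A := by
    rw [Ring.lie_def, sub_mul, mul_assoc A B A]
  rw [hlie, trace_sub, trace_mul_comm A (B * A), sub_self]

theorem exists_common_eigenvector_of_det_lie_eq_zero {K : Type*} [Field K] [IsAlgClosed K]
    {A B : Matrix (Fin 2) (Fin 2) K} (hdet : det ⁅A, B⁆ = 0) :
    ∃ v : Fin 2 → K, v ≠ 0 ∧ (∃ a : K, A *ᵥ v = a • v) ∧ ∃ b : K, B *ᵥ v = b • v := by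
  by_cases hzero : ⁅A, B⁆ = 0
  · have hcomm : Commute (toLin' A) (toLin' B) :=
      Commute.map (commute_iff_lie_eq.mpr hzero) toLinAlgEquiv'
    obtain ⟨v, a, b, ha, hb⟩ := exists_common_hasEigenvector_of_commute hcomm
    exact ⟨v, ha.2, ⟨a, ha.apply_eq_smul⟩, b, hb.apply_eq_smul⟩
  · obtain ⟨v, hv0, hv⟩ := exists_mulVec_eq_zero_iff.mpr hdet
    have hvker : v ∈ (toLin' ⁅A, B⁆).ker := hv
    have hline : finrank K (toLin' ⁅A, B⁆).ker = 1 :=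
      finrank_ker_eq_one_of_finrank_eq_two (finrank_fin_fun K)
        (by simpa using hzero) ((Submodule.ne_bot_iff _).mpr ⟨v, hvker, hv0⟩)
    have hA := mapsTo_ker_of_semiconjBy ((semiconjBy_lie_left_adjugate A B).map toLinAlgEquiv')
    have hB := mapsTo_ker_of_semiconjBy ((semiconjBy_lie_right_adjugate A B).map toLinAlgEquiv')
    exact ⟨v, hv0, exists_apply_eq_smul_of_finrank_eq_one hline hA hvker hv0,
      exists_apply_eq_smul_of_finrank_eq_one hline hB hvker hv0⟩

end LieTwoByTwo

section SpecialLinear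

theorem exists_specialLinearGroup_coe_eq_smul {K n : Type*} [Field K] [IsAlgClosed K] [Fintype n]
    [DecidableEq n] [Nonempty n] {M : Matrix n n K} (hM : M.det ≠ 0) :
    ∃ (P : Matrix.SpecialLinearGroup n K) (c : K), (P : Matrix n n K) = c • M := by
  obtain ⟨c, hc⟩ := IsAlgClosed.exists_pow_nat_eq M.det⁻¹ (Fintype.card_pos (α := n))
  exact ⟨⟨c • M, by rw [det_smul, hc, inv_mul_cancel₀ hM]⟩, c, rfl⟩

theorem exists_trace_eq_zero_semiconjBy_inv {K : Type*} [Field K] [IsAlgClosed K] {A B : SL(2, K)}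
    (h : det ⁅(A : Matrix (Fin 2) (Fin 2) K), (B : Matrix (Fin 2) (Fin 2) K)⁆ ≠ 0) :
    ∃ P : SL(2, K), trace (P : Matrix (Fin 2) (Fin 2) K) = 0 ∧
      trace ((P * A : SL(2, K)) : Matrix (Fin 2) (Fin 2) K) = 0 ∧
      SemiconjBy P A A⁻¹ ∧ SemiconjBy P B B⁻¹ := by
  obtain ⟨P, c, hP⟩ := exists_specialLinearGroup_coe_eq_smul h
  refine ⟨P, ?_, ?_, Subtype.ext ?_, Subtype.ext ?_⟩
  · rw [hP, trace_smul, LieAlgebra.matrix_trace_commutator_zero, smul_zero]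
  · rw [Matrix.SpecialLinearGroup.coe_mul, hP, smul_mul, trace_smul, trace_lie_mul_left, smul_zero]
  · simp only [Matrix.SpecialLinearGroup.coe_mul, Matrix.SpecialLinearGroup.coe_inv, hP,
      smul_mul, Matrix.mul_smul, (semiconjBy_lie_left_adjugate _ _).eq]
  · simp only [Matrix.SpecialLinearGroup.coe_mul, Matrix.SpecialLinearGroup.coe_inv, hP,
      smul_mul, Matrix.mul_smul, (semiconjBy_lie_right_adjugate _ _).eq]

variable {R : Type*} [CommRing R]

theorem trace_coe_mul_comm {n : Type*} [Fintype n] [DecidableEq n]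
    (X Y : Matrix.SpecialLinearGroup n R) :
    trace ((X * Y : Matrix.SpecialLinearGroup n R) : Matrix n n R) =
      trace ((Y * X : Matrix.SpecialLinearGroup n R) : Matrix n n R) := by
  rw [Matrix.SpecialLinearGroup.coe_mul, Matrix.SpecialLinearGroup.coe_mul, trace_mul_comm]

theorem isOfFinOrder_of_trace_eq_zero {P : SL(2, R)}
    (hP : trace (P : Matrix (Fin 2) (Fin 2) R) = 0) : IsOfFinOrder P := by
  have hsq : P * P = -1 := Subtype.ext <| by
    simp [mul_self_eq_trace_smul_sub_det_smul_one, hP]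
  refine isOfFinOrder_iff_pow_eq_one.mpr ⟨4, by norm_num, ?_⟩
  calc P ^ 4 = (P * P) * (P * P) := by simp only [pow_succ, pow_zero, one_mul, mul_assoc]
    _ = 1 := by rw [hsq, neg_one_mul, neg_neg]

theorem trace_inv (X : SL(2, R)) :
    trace ((X⁻¹ : SL(2, R)) : Matrix (Fin 2) (Fin 2) R) = trace (X : Matrix (Fin 2) (Fin 2) R) := by
  rw [Matrix.SpecialLinearGroup.coe_inv, adjugate_fin_two, trace_fin_two_of, trace_fin_two,
    add_comm]

theorem trace_mul_add_trace_mul_inv (X Y : SL(2, R)) :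
    trace ((X * Y : SL(2, R)) : Matrix (Fin 2) (Fin 2) R) +
      trace ((X * Y⁻¹ : SL(2, R)) : Matrix (Fin 2) (Fin 2) R) =
    trace (X : Matrix (Fin 2) (Fin 2) R) * trace (Y : Matrix (Fin 2) (Fin 2) R) := by
  simp [adjugate_eq_trace_smul_one_sub, mul_sub, mul_comm]

theorem trace_commutator_mul_of_semiconjBy_inv {A B P : SL(2, R)} (hA : SemiconjBy P A A⁻¹)
    (hB : SemiconjBy P B B⁻¹) :
    trace ((P * A * B * (P * A)⁻¹ * B⁻¹ : SL(2, R)) : Matrix (Fin 2) (Fin 2) R) =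
      trace (B : Matrix (Fin 2) (Fin 2) R) ^ 2 -
        trace ((A * B * A⁻¹ * B⁻¹ : SL(2, R)) : Matrix (Fin 2) (Fin 2) R) := by
  have hconj : P * A * B * (P * A)⁻¹ = A⁻¹ * B⁻¹ * A := by
    rw [mul_inv_eq_iff_eq_mul, hA.eq, mul_assoc, hB.eq]
    group
  have htrace : trace ((A⁻¹ * B⁻¹ * A : SL(2, R)) : Matrix (Fin 2) (Fin 2) R) =
      trace (B : Matrix (Fin 2) (Fin 2) R) := by
    rw [trace_coe_mul_comm, ← mul_assoc, mul_inv_cancel, one_mul, trace_inv]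
  have hcomm : trace ((A⁻¹ * B⁻¹ * A * B : SL(2, R)) : Matrix (Fin 2) (Fin 2) R) =
      trace ((A * B * A⁻¹ * B⁻¹ : SL(2, R)) : Matrix (Fin 2) (Fin 2) R) := by
    rw [mul_assoc, trace_coe_mul_comm, mul_assoc (A * B)]
  rw [hconj, eq_sub_iff_add_eq', ← hcomm, trace_mul_add_trace_mul_inv, htrace, sq]

end SpecialLinear

section Discreteness

variable {G : Type*} [Group G]

theorem mem_normalizer_closure_of_forall_semiconjBy_inv {S : Set G} {p : G}
    (h : ∀ s ∈ S, SemiconjBy p s s⁻¹) : p ∈ normalizer (closure S : Set G) := by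
  have himage : MulAut.conj p '' S = S⁻¹ := by
    rw [← Set.image_inv_eq_inv]
    exact Set.image_congr fun s hs => by rw [MulAut.conj_apply, (h s hs).eq, mul_inv_cancel_right]
  rw [mem_normalizer_iff_map_conj_eq, MonoidHom.map_closure, MonoidHom.coe_coe, himage,
    closure_inv]

theorem relIndex_sup_eq_of_le_normalizer {H N : Subgroup G} (h : H ≤ normalizer (N : Set G)) :
    N.relIndex (H ⊔ N) = N.relIndex H :=
  have := normal_subgroupOf_of_le_normalizer h
  have := normal_subgroupOf_sup_of_le_normalizer h
  Nat.card_congr (QuotientGroup.quotientInfEquivProdNormalizerQuotient H N h).toEquiv.symm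

variable [TopologicalSpace G] [IsTopologicalGroup G] [T2Space G]

theorem discreteTopology_sup_of_le_normalizer {H N : Subgroup G} [N.IsFiniteRelIndex H]
    (h : H ≤ normalizer (N : Set G)) (hN : DiscreteTopology N) :
    DiscreteTopology (H ⊔ N : Subgroup G) := by
  have : N.IsFiniteRelIndex (H ⊔ N) :=
    ⟨relIndex_sup_eq_of_le_normalizer h ▸ IsFiniteRelIndex.relIndex_ne_zero⟩
  exact (discreteTopology_iff_of_isFiniteRelIndex le_sup_right).mp hN

theorem discreteTopology_closure_mul_pair {a b p : G} (hp : IsOfFinOrder p)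
    (ha : SemiconjBy p a a⁻¹) (hb : SemiconjBy p b b⁻¹)
    (hab : DiscreteTopology (Subgroup.closure {a, b})) :
    DiscreteTopology (Subgroup.closure {p * a, b}) := by
  set N := Subgroup.closure {a, b}
  have hnorm : zpowers p ≤ normalizer (N : Set G) :=
    zpowers_le.mpr <| mem_normalizer_closure_of_forall_semiconjBy_inv <| by
      simpa using ⟨ha, hb⟩
  have hle : Subgroup.closure {p * a, b} ≤ zpowers p ⊔ N := by
    have hpa_mem : p * a ∈ zpowers p ⊔ N :=
      mul_mem_sup (mem_zpowers p) (subset_closure (Set.mem_insert a {b}))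
    have hb_mem : b ∈ zpowers p ⊔ N :=
      mem_sup_right (subset_closure (Set.mem_insert_of_mem a rfl))
    exact (closure_le _).mpr (Set.pair_subset hpa_mem hb_mem)
  have : Finite (zpowers p) := hp.finite_zpowers
  have : N.IsFiniteRelIndex (zpowers p) := ⟨FiniteIndex.index_ne_zero⟩
  have := discreteTopology_sup_of_le_normalizer hnorm hab
  exact .of_subset this hle

end Discreteness

instance : IsTopologicalGroup SL2C := Matrix.SpecialLinearGroup.topologicalGroup

instance : T2Space SL2C := inferInstanceAs (T2Space {M : Matrix (Fin 2) (Fin 2) ℂ // M.det = 1})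

/-- Lemma 4.3, final assertion: if `A`, `B` have disjoint fixed points then there is
`F` of order two with `γ(F,B) = β(B) - γ(A,B)` preserving discreteness of `⟨·,B⟩`. -/
theorem exists_order_two_companion (A B : SL2C)
    (hA1 : A ≠ 1) (hA2 : A ≠ -1) (hB1 : B ≠ 1) (hB2 : B ≠ -1)
    (hfix : ¬ HasCommonEigenvector A B) :
    ∃ F : SL2C, Matrix.trace (F : Matrix (Fin 2) (Fin 2) ℂ) = 0 ∧
      γp F B = βp B - γp A B ∧
      (IsDiscreteSubgroup (Subgroup.closure {A, B}) →
        IsDiscreteSubgroup (Subgroup.closure {F, B})) := by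
  have hdet : det ⁅(A : Matrix (Fin 2) (Fin 2) ℂ), (B : Matrix (Fin 2) (Fin 2) ℂ)⁆ ≠ 0 :=
    fun h => hfix (exists_common_eigenvector_of_det_lie_eq_zero h)
  obtain ⟨P, hP, hPA, hA, hB⟩ := exists_trace_eq_zero_semiconjBy_inv hdet
  refine ⟨P * A, hPA, ?_, fun hdisc => ?_⟩
  · rw [γp, trace_commutator_mul_of_semiconjBy_inv hA hB, βp, γp]
    ring
  · exact discreteTopology_closure_mul_pair (isOfFinOrder_of_trace_eq_zero hP) hA hB hdisc

end
end

section
/- Let A, H ∈ SL(2,ℂ) with A elliptic of order n ≥ 3 and H = C·A·C⁻¹ or H = −C·A·C⁻¹ for some C ∈ SL(2,ℂ) (so A and H are conjugate elliptics of order n). If the image in PSL(2,ℂ) of the subgroup generated by A and H is isomorphic to the alternating group A₅, then the triple (γ(A,H), β(A), β(H)) equals (−1, −3, −3), or ((√5−3)/2, (√5−5)/2, (√5−5)/2) = (−0.3819…, −1.3819…, −1.3819…), or (−(3+√5)/2, −(5+√5)/2, −(5+√5)/2) = (−2.618…, −3.618…, −3.618…). -/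
open Matrix Real

noncomputable section

/-
Every element of `A₅` has order 1, 2, 3 or 5. By Cayley-Hamilton the powers of `g ∈ SL(2, K)` are
combinations of `g` and `1` whose coefficients are Chebyshev polynomials in `tr g`, so the traces of
the preimages of the elements of `A₅` lie in an explicit finite set. The traces `x = tr A = tr H`,
`z = tr (A * H)` and `w = tr ⁅A, H⁆` all belong to it and satisfy Fricke's relation
`w = (z - 2) * (z + 2 - x ^ 2) + 2`. When `A` has order 5 this already forces `w = x ^ 2 - 1`. When
`A` has order 3, `w = 0` would also be possible, as for `A₄`, so one uses that two 3-cycles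
generating `A₅` have a 5-cycle as their product.
-/

section Trace

open Polynomial Subgroup
open Polynomial.Chebyshev (S S_eq S_one S_two S_add_two)
open scoped MatrixGroups commutatorElement

variable {R : Type*} [CommRing R]

/-- The trace of an element of `SL(2, R)`, taken as a matrix. -/
abbrev slTrace (g : SL(2, R)) : R :=
  (g : Matrix (Fin 2) (Fin 2) R).trace

theorem coe_sq_eq_slTrace_smul_sub_one (g : SL(2, R)) :
    (g : Matrix (Fin 2) (Fin 2) R) ^ 2 = slTrace g • (g : Matrix (Fin 2) (Fin 2) R) - 1 := by
  nontriviality R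
  have cayley_hamilton := aeval_self_charpoly (g : Matrix (Fin 2) (Fin 2) R)
  rw [charpoly_fin_two, g.det_coe] at cayley_hamilton
  simp only [map_add, map_sub, map_mul, map_pow, aeval_X, aeval_C, map_one, ← Algebra.smul_def]
    at cayley_hamilton
  linear_combination (norm := module) cayley_hamilton

theorem coe_pow_eq_chebyshevS_smul_sub (g : SL(2, R)) (n : ℕ) :
    (g : Matrix (Fin 2) (Fin 2) R) ^ n =
      (S R (n - 1)).eval (slTrace g) • (g : Matrix (Fin 2) (Fin 2) R)
        - (S R (n - 2)).eval (slTrace g) • 1 := by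
  induction n with
  | zero => simp
  | succ n ih =>
    have hS : (S R n).eval (slTrace g) = slTrace g * (S R (n - 1)).eval (slTrace g)
        - (S R (n - 2)).eval (slTrace g) := by
      rw [S_eq, eval_sub, eval_mul, eval_X]
    rw [pow_succ, ih, sub_mul, smul_mul_assoc, smul_mul_assoc, one_mul, ← pow_two,
      coe_sq_eq_slTrace_smul_sub_one, Nat.cast_succ, add_sub_cancel_right,
      show (n : ℤ) + 1 - 2 = n - 1 by ring, hS]
    module

theorem mem_center_iff_exists_coe_eq_smul_one {g : SL(2, R)} :
    g ∈ center SL(2, R) ↔ ∃ r : R, (g : Matrix (Fin 2) (Fin 2) R) = r • 1 := by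
  rw [Matrix.SpecialLinearGroup.mem_center_iff]
  refine ⟨fun ⟨r, _, hr⟩ ↦ ⟨r, ?_⟩, fun ⟨r, hr⟩ ↦ ⟨r, ?_, ?_⟩⟩
  · rw [← hr, smul_one_eq_diagonal, scalar_apply]
  · rw [← g.det_coe, hr, det_smul, det_one, mul_one]
  · rw [hr, smul_one_eq_diagonal, scalar_apply]

theorem mem_center_iff_eq_one_or_eq_neg_one [IsDomain R] {g : SL(2, R)} :
    g ∈ center SL(2, R) ↔ g = 1 ∨ g = -1 := by
  refine ⟨fun hg ↦ ?_, ?_⟩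
  · obtain ⟨r, hr, hgr⟩ := Matrix.SpecialLinearGroup.mem_center_iff.1 hg
    rw [Fintype.card_fin, sq_eq_one_iff] at hr
    refine hr.imp (fun hr ↦ Subtype.ext ?_) fun hr ↦ Subtype.ext ?_
    · rw [← hgr, hr, map_one, Matrix.SpecialLinearGroup.coe_one]
    · rw [← hgr, hr, map_neg, map_one, Matrix.SpecialLinearGroup.coe_neg,
        Matrix.SpecialLinearGroup.coe_one]
  · rintro (rfl | rfl)
    · exact one_mem _
    · exact Subgroup.mem_center_iff.2 fun g ↦ by rw [mul_neg, neg_mul, mul_one, one_mul]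

theorem slTrace_eq_two_or_neg_two_of_mem_center [IsDomain R] {g : SL(2, R)}
    (hg : g ∈ center SL(2, R)) : slTrace g = 2 ∨ slTrace g = -2 := by
  rcases mem_center_iff_eq_one_or_eq_neg_one.1 hg with rfl | rfl <;> simp [slTrace]

theorem slTrace_conj (g h : SL(2, R)) : slTrace (g * h * g⁻¹) = slTrace h := by
  simp only [slTrace, Matrix.SpecialLinearGroup.coe_mul]
  rw [trace_mul_comm, ← mul_assoc, ← Matrix.SpecialLinearGroup.coe_mul, inv_mul_cancel,
    Matrix.SpecialLinearGroup.coe_one, one_mul]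

theorem slTrace_commutator (A B : SL(2, R)) :
    slTrace ⁅A, B⁆ = slTrace A ^ 2 + slTrace B ^ 2 + slTrace (A * B) ^ 2
      - slTrace A * slTrace B * slTrace (A * B) - 2 := by
  have hA := A.det_coe
  have hB := B.det_coe
  simp only [det_fin_two] at hA hB
  simp only [commutatorElement_def, Matrix.SpecialLinearGroup.coe_mul,
    Matrix.SpecialLinearGroup.coe_inv, adjugate_fin_two, trace_fin_two, mul_apply,
    Fin.sum_univ_two, of_apply, cons_val_zero, cons_val_one]
  grind

/-- The trace of `⁅A, B⁆` for `A` and `B` in `SL(2, R)` of the same trace `x` whose product has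
trace `z`. -/
def commutatorTrace (x z : R) : R :=
  (z - 2) * (z + 2 - x ^ 2) + 2

theorem slTrace_commutator_of_slTrace_eq {A B : SL(2, R)} (h : slTrace B = slTrace A) :
    slTrace ⁅A, B⁆ = commutatorTrace (slTrace A) (slTrace (A * B)) := by
  rw [slTrace_commutator, commutatorTrace, h]
  ring

variable {K : Type*} [Field K] {g : SL(2, K)}

theorem pow_mem_center_iff_eval_chebyshevS_eq_zero (hg : g ∉ center SL(2, K)) (n : ℕ) :
    g ^ n ∈ center SL(2, K) ↔ (S K (n - 1)).eval (slTrace g) = 0 := by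
  rw [mem_center_iff_exists_coe_eq_smul_one] at hg ⊢
  rw [Matrix.SpecialLinearGroup.coe_pow, coe_pow_eq_chebyshevS_smul_sub]
  set s := (S K (n - 1)).eval (slTrace g)
  set s' := (S K (n - 2)).eval (slTrace g)
  refine ⟨fun ⟨r, hr⟩ ↦ by_contra fun hs ↦ hg ⟨s⁻¹ * (r + s'), ?_⟩, fun hs ↦ ⟨-s', ?_⟩⟩
  · rw [mul_smul, add_smul, ← hr, sub_add_cancel, inv_smul_smul₀ hs]
  · rw [hs, zero_smul, zero_sub, neg_smul]

theorem sq_mem_center_iff_slTrace_eq_zero (hg : g ∉ center SL(2, K)) :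
    g ^ 2 ∈ center SL(2, K) ↔ slTrace g = 0 := by
  rw [pow_mem_center_iff_eval_chebyshevS_eq_zero hg]
  norm_num

theorem pow_three_mem_center_iff_slTrace_sq_eq_one (hg : g ∉ center SL(2, K)) :
    g ^ 3 ∈ center SL(2, K) ↔ slTrace g ^ 2 = 1 := by
  rw [pow_mem_center_iff_eval_chebyshevS_eq_zero hg]
  norm_num [S_two, sub_eq_zero]

theorem pow_five_mem_center_iff_slTrace_pow_four_eq (hg : g ∉ center SL(2, K)) :
    g ^ 5 ∈ center SL(2, K) ↔ slTrace g ^ 4 - 3 * slTrace g ^ 2 + 1 = 0 := by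
  have hS₃ : S K 3 = X * S K 2 - S K 1 := S_add_two K 1
  have hS₄ : S K 4 = X * S K 3 - S K 2 := S_add_two K 2
  have hS : S K 4 = X ^ 4 - 3 * X ^ 2 + 1 := by
    rw [hS₄, hS₃, S_two, S_one]
    ring
  rw [pow_mem_center_iff_eval_chebyshevS_eq_zero hg]
  norm_num [hS]

end Trace

section IcosahedralTrace

/-- `t` is a root of one of the rescaled Chebyshev polynomials `S₁`, `S₂`, `S₄`. These are the
traces of the noncentral elements of `SL(2, K)` whose image in `PSL(2, K)` has order `2`, `3`
or `5`, as every nontrivial element of `A₅` does. -/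
def IsIcosahedralTrace {R : Type*} [CommRing R] (t : R) : Prop :=
  t = 0 ∨ t ^ 2 = 1 ∨ t ^ 4 - 3 * t ^ 2 + 1 = 0

variable {R : Type*} [CommRing R] [IsDomain R] {r t : R}

theorem pow_four_sub_three_mul_sq_add_one_eq_zero_iff :
    t ^ 4 - 3 * t ^ 2 + 1 = 0 ↔ t ^ 2 = t + 1 ∨ t ^ 2 = 1 - t := by
  rw [← sub_eq_zero (b := t + 1), ← sub_eq_zero (b := 1 - t), ← mul_eq_zero]
  ring_nf

theorem IsIcosahedralTrace.eq_of_sq_eq_add_one (ht : IsIcosahedralTrace t) (hr : r ^ 2 = r + 1) :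
    t = 0 ∨ t = 1 ∨ t = -1 ∨ t = r ∨ t = 1 - r ∨ t = -r ∨ t = r - 1 := by
  have golden (u : R) (hu : u ^ 2 = u + 1) : u = r ∨ u = 1 - r := by
    have : (u - r) * (u - (1 - r)) = 0 := by linear_combination hu - hr
    simpa only [mul_eq_zero, sub_eq_zero] using this
  rcases ht with rfl | ht | ht
  · exact .inl rfl
  · exact .inr ((sq_eq_one_iff.1 ht).imp_right .inl)
  · rcases pow_four_sub_three_mul_sq_add_one_eq_zero_iff.1 ht with ht | ht
    · grind
    · grind [golden (-t) (by linear_combination ht)]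

variable {K : Type*} [Field K] [CharZero K] {x z : K}

theorem commutatorTrace_eq_one (hx : x ^ 2 = 1)
    (hz : (z = 2 ∨ z = -2) ∨ z ^ 4 - 3 * z ^ 2 + 1 = 0)
    (hw : IsIcosahedralTrace (commutatorTrace x z)) : commutatorTrace x z = 1 := by
  have hwz : commutatorTrace x z = z ^ 2 - z := by
    rw [commutatorTrace, hx]
    ring
  rw [hwz] at hw ⊢
  rw [pow_four_sub_three_mul_sq_add_one_eq_zero_iff] at hz
  rcases hz with (rfl | rfl) | hz | hz
  · norm_num [IsIcosahedralTrace] at hw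
  · norm_num [IsIcosahedralTrace] at hw
  · linear_combination hz
  · -- Here `w = 1 - 2 * z = 2 ± √5`, which is not icosahedral.
    have hw_sq : (z ^ 2 - z) ^ 2 = 4 * (z ^ 2 - z) + 1 := by
      linear_combination (z ^ 2 - 3 * z + 1) * hz
    unfold IsIcosahedralTrace at hw
    grind

theorem commutatorTrace_eq_sq_sub_one (hx : x ^ 4 - 3 * x ^ 2 + 1 = 0)
    (hz : (z = 2 ∨ z = -2) ∨ IsIcosahedralTrace z)
    (hw : IsIcosahedralTrace (commutatorTrace x z)) : commutatorTrace x z = x ^ 2 - 1 := by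
  obtain ⟨r, hxr⟩ : ∃ r, x ^ 2 = r + 1 := ⟨x ^ 2 - 1, by ring⟩
  have hr : r ^ 2 = r + 1 := by linear_combination hx - (x ^ 2 + r - 2) * hxr
  rw [commutatorTrace, hxr] at hw ⊢
  suffices z = 1 ∨ z = r by rcases this with rfl | rfl <;> grind
  have hz' := hz.imp_right (·.eq_of_sq_eq_add_one hr)
  have hw' := hw.eq_of_sq_eq_add_one hr
  -- For `z` equal to `2`, `-2`, `0`, `-1`, `1 - r`, `-r`, `r - 1` the commutator would have trace
  -- `2`, `4r + 6`, `2r`, `3r + 2`, `2r + 2`, `5r + 2`, `2`, respectively.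
  rcases hz' with (rfl | rfl) | rfl | rfl | rfl | rfl | rfl | rfl | rfl <;> grind

end IcosahedralTrace

section GroupHom

open Subgroup
open scoped commutatorElement

variable {G G' : Type*} [Group G] [Group G']

theorem exists_smul_ne_of_closure_eq_top {α : Type*} [MulAction G α]
    [MulAction.IsPretransitive G α] [Nontrivial α] {s : Set G} (hs : Subgroup.closure s = ⊤)
    (x : α) : ∃ g ∈ s, g • x ≠ x := by
  by_contra! hfix
  have hstab : ⊤ ≤ MulAction.stabilizer G x := hs ▸ (closure_le _).2 hfix
  obtain ⟨y, hyx⟩ := exists_ne x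
  obtain ⟨g, rfl⟩ := MulAction.exists_smul_eq G x y
  exact hyx (hstab (mem_top g))

theorem isMulCommutative_of_closure_pair_eq_top {a b : G} (h : Subgroup.closure {a, b} = ⊤)
    (hab : Commute a b) : IsMulCommutative G := by
  have hcomm := isMulCommutative_closure (k := {a, b}) <| by
    rintro x (rfl | rfl) y (rfl | rfl)
    exacts [rfl, hab.eq, hab.symm.eq, rfl]
  rw [h] at hcomm
  exact .of_comm fun x y ↦ setLike_mul_comm (mem_top x) (mem_top y)

theorem closure_pair_map_eq_top {a b : G} {f : G →* G'} (hf : Function.Surjective f)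
    (hab : Subgroup.closure {a, b} = ⊤) : Subgroup.closure {f a, f b} = ⊤ := by
  rw [← Set.image_pair, ← MonoidHom.map_closure, hab, map_top_of_surjective f hf]

theorem commutatorElement_notMem_ker_of_closure_pair_eq_top {a b : G} {f : G →* G'}
    (hf : Function.Surjective f) (hab : Subgroup.closure {a, b} = ⊤)
    (hG' : ¬ IsMulCommutative G') : ⁅a, b⁆ ∉ f.ker := by
  intro hker
  rw [MonoidHom.mem_ker, map_commutatorElement, commutatorElement_eq_one_iff_commute] at hker
  exact hG' (isMulCommutative_of_closure_pair_eq_top (closure_pair_map_eq_top hf hab) hker)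

theorem closure_pair_mk_eq_top (a b : G) :
    Subgroup.closure {(⟨a, subset_closure (.inl rfl)⟩ : Subgroup.closure {a, b}),
      ⟨b, subset_closure (.inr rfl)⟩} = ⊤ := by
  rw [← closure_closure_coe_preimage]
  congr 1
  ext ⟨x, hx⟩
  simp only [Set.mem_insert_iff, Set.mem_singleton_iff, Subtype.mk.injEq, Set.mem_preimage]

theorem map_pow_eq_one_iff_of_ker_eq_subgroupOf {N H : Subgroup G} {f : H →* G'}
    (hker : f.ker = N.subgroupOf H) (g : H) (n : ℕ) : f g ^ n = 1 ↔ (g : G) ^ n ∈ N := by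
  rw [← map_pow, ← MonoidHom.mem_ker, hker, mem_subgroupOf, coe_pow]

end GroupHom

section AlternatingGroup

open Equiv.Perm

theorem pow_eq_one_of_alternatingGroup_five (g : alternatingGroup (Fin 5)) :
    g ^ 2 = 1 ∨ g ^ 3 = 1 ∨ g ^ 5 = 1 := by
  have (σ : Equiv.Perm (Fin 5)) : sign σ = 1 → σ ^ 2 = 1 ∨ σ ^ 3 = 1 ∨ σ ^ 5 = 1 := by
    revert σ
    decide +kernel
  exact_mod_cast this g (mem_alternatingGroup.1 g.2)

theorem mul_pow_five_eq_one_of_pow_three_eq_one {σ τ : Equiv.Perm (Fin 5)}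
    (hσ : σ ^ 3 = 1) (hτ : τ ^ 3 = 1) (hfix : ∀ i, σ i = i → τ i ≠ i) : (σ * τ) ^ 5 = 1 := by
  -- Two 3-cycles without common fixed point overlap in one point, so their product is a 5-cycle.
  revert σ τ
  decide +kernel

theorem mul_pow_five_eq_one_of_closure_eq_top {a b : alternatingGroup (Fin 5)}
    (ha : a ^ 3 = 1) (hb : b ^ 3 = 1) (hab : Subgroup.closure {a, b} = ⊤) :
    (a * b) ^ 5 = 1 := by
  have := alternatingGroup.isPretransitive_of_three_le_card (Fin 5) (by norm_num)
  refine Subtype.ext <| mul_pow_five_eq_one_of_pow_three_eq_one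
    (congrArg Subtype.val ha) (congrArg Subtype.val hb) fun i hai hbi ↦ ?_
  obtain ⟨g, rfl | rfl, hg⟩ := exists_smul_ne_of_closure_eq_top hab i
  exacts [hg hai, hg hbi]

theorem not_isMulCommutative_alternatingGroup_five :
    ¬ IsMulCommutative (alternatingGroup (Fin 5)) := by
  rw [alternatingGroup.isMulCommutative_iff_card_le_three]
  norm_num

end AlternatingGroup

section CentralKernel

open Subgroup
open scoped MatrixGroups commutatorElement

variable {K : Type*} [Field K] {Γ : Subgroup SL(2, K)} {f : Γ →* alternatingGroup (Fin 5)}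

theorem isIcosahedralTrace_of_ker_eq_center (hker : f.ker = (center SL(2, K)).subgroupOf Γ)
    {g : Γ} (hg : (g : SL(2, K)) ∉ center SL(2, K)) :
    IsIcosahedralTrace (slTrace (g : SL(2, K))) := by
  have h := pow_eq_one_of_alternatingGroup_five (f g)
  simp only [map_pow_eq_one_iff_of_ker_eq_subgroupOf hker] at h
  rwa [sq_mem_center_iff_slTrace_eq_zero hg, pow_three_mem_center_iff_slTrace_sq_eq_one hg,
    pow_five_mem_center_iff_slTrace_pow_four_eq hg] at h

variable {A B : Γ}

theorem isIcosahedralTrace_commutator (hker : f.ker = (center SL(2, K)).subgroupOf Γ)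
    (hsurj : Function.Surjective f) (hgen : Subgroup.closure {A, B} = ⊤) :
    IsIcosahedralTrace (slTrace ⁅(A : SL(2, K)), (B : SL(2, K))⁆) := by
  have hAB := commutatorElement_notMem_ker_of_closure_pair_eq_top hsurj hgen
    not_isMulCommutative_alternatingGroup_five
  rw [hker, mem_subgroupOf] at hAB
  exact isIcosahedralTrace_of_ker_eq_center hker (g := ⁅A, B⁆) hAB

variable [CharZero K]

theorem slTrace_commutator_eq_of_pow_four_eq (hker : f.ker = (center SL(2, K)).subgroupOf Γ)
    (hsurj : Function.Surjective f) (hgen : Subgroup.closure {A, B} = ⊤)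
    (htr : slTrace (B : SL(2, K)) = slTrace A)
    (hA : slTrace (A : SL(2, K)) ^ 4 - 3 * slTrace (A : SL(2, K)) ^ 2 + 1 = 0) :
    slTrace ⁅(A : SL(2, K)), (B : SL(2, K))⁆ = slTrace A ^ 2 - 1 := by
  have hcomm := isIcosahedralTrace_commutator hker hsurj hgen
  rw [slTrace_commutator_of_slTrace_eq htr] at hcomm ⊢
  refine commutatorTrace_eq_sq_sub_one hA ?_ hcomm
  by_cases hAB : (A * B : SL(2, K)) ∈ center SL(2, K)
  · exact .inl (slTrace_eq_two_or_neg_two_of_mem_center hAB)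
  · exact .inr (isIcosahedralTrace_of_ker_eq_center hker (g := A * B) hAB)

theorem slTrace_commutator_eq_one_of_sq_eq_one (hker : f.ker = (center SL(2, K)).subgroupOf Γ)
    (hsurj : Function.Surjective f) (hgen : Subgroup.closure {A, B} = ⊤)
    (htr : slTrace (B : SL(2, K)) = slTrace A) (hA : slTrace (A : SL(2, K)) ^ 2 = 1) :
    slTrace ⁅(A : SL(2, K)), (B : SL(2, K))⁆ = 1 := by
  have cube {g : Γ} (hg : slTrace (g : SL(2, K)) ^ 2 = 1) : f g ^ 3 = 1 := by
    rw [map_pow_eq_one_iff_of_ker_eq_subgroupOf hker]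
    by_cases hgc : (g : SL(2, K)) ∈ center SL(2, K)
    exacts [pow_mem hgc 3, (pow_three_mem_center_iff_slTrace_sq_eq_one hgc).2 hg]
  have hfive : (f A * f B) ^ 5 = 1 := mul_pow_five_eq_one_of_closure_eq_top
    (cube hA) (cube (htr ▸ hA)) (closure_pair_map_eq_top hsurj hgen)
  rw [← map_mul, map_pow_eq_one_iff_of_ker_eq_subgroupOf hker] at hfive
  have hcomm := isIcosahedralTrace_commutator hker hsurj hgen
  rw [slTrace_commutator_of_slTrace_eq htr] at hcomm ⊢
  refine commutatorTrace_eq_one hA ?_ hcomm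
  by_cases hAB : (A * B : SL(2, K)) ∈ center SL(2, K)
  · exact .inl (slTrace_eq_two_or_neg_two_of_mem_center hAB)
  · exact .inr ((pow_five_mem_center_iff_slTrace_pow_four_eq hAB).1 hfive)

end CentralKernel

section Parameters

open Subgroup

theorem pslImage_closure_pair_neg (A H : SL2C) :
    pslImage (Subgroup.closure {A, -H}) = pslImage (Subgroup.closure {A, H}) := by
  have : ((-H : SL2C) : PSL2C) = H := by
    rw [QuotientGroup.eq, inv_neg, neg_mul, inv_mul_cancel]
    exact mem_center_iff_eq_one_or_eq_neg_one.2 (.inr rfl)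
  simp only [pslImage, MonoidHom.map_closure, Set.image_pair, QuotientGroup.mk'_apply, this]

theorem γp_neg (A H : SL2C) : γp A (-H) = γp A H := by
  simp only [γp, inv_neg, mul_neg, neg_mul, neg_neg]

theorem βp_neg (A : SL2C) : βp (-A) = βp A := by
  simp only [βp, Matrix.SpecialLinearGroup.coe_neg, trace_neg, neg_sq]

theorem βp_conj (C A : SL2C) : βp (C * A * C⁻¹) = βp A :=
  congrArg (· ^ 2 - 4) (slTrace_conj C A)

theorem exists_hom_of_pslImage_mulEquiv {G : Type*} [Group G] {Γ : Subgroup SL2C}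
    (e : pslImage Γ ≃* G) :
    ∃ f : Γ →* G, Function.Surjective f ∧ f.ker = (center SL2C).subgroupOf Γ := by
  unfold pslImage at e
  refine ⟨(e : Γ.map _ →* G).comp ((QuotientGroup.mk' (center SL2C)).subgroupMap Γ),
    e.surjective.comp (MonoidHom.subgroupMap_surjective _ Γ), ?_⟩
  rw [MonoidHom.ker_mulEquiv_comp, ker_subgroupMap, QuotientGroup.ker_mk']

theorem parameters_of_slTrace_eq {A H : SL2C} (hA : A ^ 2 ∉ center SL2C)
    (htr : slTrace H = slTrace A)
    (e : pslImage (Subgroup.closure {A, H}) ≃* alternatingGroup (Fin 5)) :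
    (γp A H = -1 ∧ βp A = -3) ∨ (γp A H = βp A + 1 ∧ βp A ^ 2 + 5 * βp A + 5 = 0) := by
  obtain ⟨f, hsurj, hker⟩ := exists_hom_of_pslImage_mulEquiv e
  let a : Subgroup.closure {A, H} := ⟨A, subset_closure (.inl rfl)⟩
  let h : Subgroup.closure {A, H} := ⟨H, subset_closure (.inr rfl)⟩
  have hgen : Subgroup.closure {a, h} = ⊤ := closure_pair_mk_eq_top A H
  have hAc : A ∉ center SL2C := fun hc ↦ hA (pow_mem hc 2)
  have hx : IsIcosahedralTrace (slTrace A) := isIcosahedralTrace_of_ker_eq_center hker (g := a) hAc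
  unfold γp βp
  rcases hx with hx | hx | hx
  · exact absurd ((sq_mem_center_iff_slTrace_eq_zero hAc).2 hx) hA
  · have hw := slTrace_commutator_eq_one_of_sq_eq_one hker hsurj hgen htr hx
    exact .inl ⟨by linear_combination hw, by linear_combination hx⟩
  · have hw := slTrace_commutator_eq_of_pow_four_eq hker hsurj hgen htr hx
    exact .inr ⟨by linear_combination hw, by linear_combination hx⟩

theorem parameters_of_conj_or_neg_conj {A H : SL2C} (hA : A ^ 2 ∉ center SL2C)
    (hconj : ∃ C : SL2C, H = C * A * C⁻¹ ∨ H = -(C * A * C⁻¹))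
    (e : pslImage (Subgroup.closure {A, H}) ≃* alternatingGroup (Fin 5)) :
    βp H = βp A ∧
      ((γp A H = -1 ∧ βp A = -3) ∨ (γp A H = βp A + 1 ∧ βp A ^ 2 + 5 * βp A + 5 = 0)) := by
  obtain ⟨C, rfl | rfl⟩ := hconj
  · exact ⟨βp_conj C A, parameters_of_slTrace_eq hA (slTrace_conj C A) e⟩
  · rw [pslImage_closure_pair_neg] at e
    rw [βp_neg, γp_neg]
    exact ⟨βp_conj C A, parameters_of_slTrace_eq hA (slTrace_conj C A) e⟩

theorem eq_or_eq_of_sq_add_five_mul_add_five_eq_zero {b : ℂ} (hb : b ^ 2 + 5 * b + 5 = 0) :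
    b = ((√5 - 5) / 2 : ℝ) ∨ b = (-(5 + √5) / 2 : ℝ) := by
  have h5 : (√5 : ℂ) ^ 2 = 5 := by exact_mod_cast Real.sq_sqrt (show (0 : ℝ) ≤ 5 by norm_num)
  have hfactor : (b - ((√5 - 5) / 2 : ℝ)) * (b - (-(5 + √5) / 2 : ℝ)) = 0 := by
    push_cast
    linear_combination hb - h5 / 4
  simpa only [mul_eq_zero, sub_eq_zero] using hfactor

end Parameters

/-- Lemma 4.8, `A₅` case: parameters of `A₅` with conjugate elliptic generators. -/
theorem params_A5 (A H : SL2C) (n : ℕ) (hn : 3 ≤ n)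
    (hA : IsEllipticOfOrder A n)
    (hconj : ∃ C : SL2C, H = C * A * C⁻¹ ∨ H = -(C * A * C⁻¹))
    (hiso : Nonempty (↥(pslImage (Subgroup.closure {A, H})) ≃* ↥(alternatingGroup (Fin 5)))) :
    (γp A H = -1 ∧ βp A = -3 ∧ βp H = -3) ∨
      (γp A H = (((Real.sqrt 5 - 3) / 2 : ℝ) : ℂ) ∧
        βp A = (((Real.sqrt 5 - 5) / 2 : ℝ) : ℂ) ∧
        βp H = (((Real.sqrt 5 - 5) / 2 : ℝ) : ℂ)) ∨
      (γp A H = ((-(3 + Real.sqrt 5) / 2 : ℝ) : ℂ) ∧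
        βp A = ((-(5 + Real.sqrt 5) / 2 : ℝ) : ℂ) ∧
        βp H = ((-(5 + Real.sqrt 5) / 2 : ℝ) : ℂ)) := by
  obtain ⟨e⟩ := hiso
  have hA2 : A ^ 2 ∉ Subgroup.center SL2C := by
    rw [mem_center_iff_eq_one_or_eq_neg_one, not_or]
    exact hA.2 2 one_le_two hn
  obtain ⟨hβ, ⟨hγ, hβA⟩ | ⟨hγ, hβA⟩⟩ := parameters_of_conj_or_neg_conj hA2 hconj e <;> rw [hβ]
  · exact .inl ⟨hγ, hβA, hβA⟩
  · right
    have hγ_of {b c : ℝ} (hb : βp A = b) (hbc : c = b + 1) : γp A H = c := by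
      rw [hγ, hb, hbc, Complex.ofReal_add, Complex.ofReal_one]
    exact (eq_or_eq_of_sq_add_five_mul_add_five_eq_zero hβA).imp
      (fun h ↦ ⟨hγ_of h (by ring), h, h⟩) fun h ↦ ⟨hγ_of h (by ring), h, h⟩

end
end
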